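/- Suppose the symmetric matrix P_SOS and the positive semidefinite symmetric matrix Q satisfy: aᵀP_SOSa ≥ εaᵀa for all a ∈ ℝⁿ, and 2aᵀP_SOS(La + Υ(a)) + (δ² − aᵀa)aᵀQa + εaᵀa ≤ 0 for all a ∈ ℝⁿ. Then for every initial condition with ‖a₀‖ ≤ δ_{f,SOS} = δ√(λmin(P_SOS)/λmax(P_SOS)), every continuous input f with sup_{0≤t≤τ} ‖f(t)‖ ≤ f_SOS = λmin(P_SOS)εδ/(λmax(P_SOS)‖2P_SOS‖), and every continuously differentiable solution a : [0,τ] → ℝⁿ of ȧ(t) = La(t) + Υ(a(t)) + f(t) with a(0) = a₀, one has ‖a(t)‖ ≤ δ for all t ∈ [0,τ]. -/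

import Mathlib

/-!
The proof is a barrier argument for the quadratic Lyapunov function `V(a) = aᵀPa` at the level
`c = λmin δ²`, writing `r = ‖a‖`. The Rayleigh bounds `λmin r² ≤ V ≤ λmax r²` show that the
admissible initial data satisfy `V ≤ c` and that `V ≤ c` forces `r ≤ δ`, so it suffices that `V`
never exceeds `c` along the solution. The second certificate, the Cauchy–Schwarz inequality and
the bound on `f` give
`V' ≤ -ε r (r - κ δ) + (r² - δ²) aᵀQa` with `κ = λmin / λmax ≤ 1`.
If `V ≥ c`, then `r² ≥ κ δ² ≥ (κ δ)²`, so the first term is nonpositive, while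
`r² - δ² ≤ (V - c) / λmin` controls the second one by a multiple of `V - c`, because `aᵀQa ≥ 0` is
bounded along the trajectory. The resulting inequality `V' ≤ K (V - c)` on `{V ≥ c}` is enough for
a Grönwall-type comparison (`le_of_deriv_le_mul_sub`). In the case `κ = 1` the derivative need not
be strictly negative on the level set, so the sign of `V'` there alone would not suffice.
-/

noncomputable section

open Matrix Set MeasureTheory

/-- Euclidean norm on `Fin n → ℝ`. -/
def eNorm {n : ℕ} (a : Fin n → ℝ) : ℝ := Real.sqrt (∑ i, a i ^ 2)

/-- Truncation of a signal: equals `g` on `(-∞, τ]` (in particular on `[0, τ]`) and `0` for `t > τ`. -/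
def trunc {E : Type*} [Zero E] (τ : ℝ) (g : ℝ → E) : ℝ → E := fun t => if t ≤ τ then g t else 0

/-- The `L∞` norm of a vector-valued signal on `[0, ∞)`: `sup_{t ≥ 0} ‖g t‖`. -/
def eLinf {n : ℕ} (g : ℝ → Fin n → ℝ) : ℝ := ⨆ t : Set.Ici (0:ℝ), eNorm (g t.1)

/-- The `Lp` norm of a vector-valued signal on `[0, ∞)`: `(∫₀^∞ ‖g t‖^p dt)^(1/p)`. -/
def eLp {n : ℕ} (p : ℝ) (g : ℝ → Fin n → ℝ) : ℝ :=
  (∫ t in Set.Ioi (0:ℝ), eNorm (g t) ^ p) ^ (1/p)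

/-- Smallest eigenvalue of a symmetric matrix, via its Rayleigh quotient characterization. -/
def lamMin {n : ℕ} (P : Matrix (Fin n) (Fin n) ℝ) : ℝ :=
  sInf {r | ∃ a : Fin n → ℝ, eNorm a = 1 ∧ r = a ⬝ᵥ P.mulVec a}

/-- Largest eigenvalue of a symmetric matrix, via its Rayleigh quotient characterization. -/
def lamMax {n : ℕ} (P : Matrix (Fin n) (Fin n) ℝ) : ℝ :=
  sSup {r | ∃ a : Fin n → ℝ, eNorm a = 1 ∧ r = a ⬝ᵥ P.mulVec a}

/-- Spectral norm of a matrix: the induced Euclidean operator norm. -/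
def specNorm {n : ℕ} (M : Matrix (Fin n) (Fin n) ℝ) : ℝ :=
  sSup {r | ∃ a : Fin n → ℝ, eNorm a = 1 ∧ r = eNorm (M.mulVec a)}

/-- The quadratic nonlinearity `Υ`, with components `Υₘ(a) = aᵀ Rₘ a`. -/
def Ups {n : ℕ} (R : Fin n → Matrix (Fin n) (Fin n) ℝ) (a : Fin n → ℝ) : Fin n → ℝ :=
  fun m => a ⬝ᵥ (R m).mulVec a

lemma eNorm_nonneg {n : ℕ} (a : Fin n → ℝ) : 0 ≤ eNorm a := Real.sqrt_nonneg _

lemma eNorm_sq {n : ℕ} (a : Fin n → ℝ) : eNorm a ^ 2 = a ⬝ᵥ a := by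
  unfold eNorm
  rw [Real.sq_sqrt (Finset.sum_nonneg fun i _ => sq_nonneg _)]
  simp [dotProduct, sq]

lemma eNorm_smul {n : ℕ} (c : ℝ) (a : Fin n → ℝ) : eNorm (c • a) = |c| * eNorm a := by
  unfold eNorm
  simp only [Pi.smul_apply, smul_eq_mul, mul_pow, ← Finset.mul_sum]
  rw [Real.sqrt_mul (sq_nonneg c), Real.sqrt_sq_eq_abs]

lemma dotProduct_le_eNorm_mul {n : ℕ} (a b : Fin n → ℝ) : a ⬝ᵥ b ≤ eNorm a * eNorm b :=
  Real.sum_mul_le_sqrt_mul_sqrt _ _ _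

lemma continuous_eNorm {n : ℕ} : Continuous (eNorm (n := n)) := by
  unfold eNorm
  fun_prop

lemma eNorm_eq_zero {n : ℕ} {a : Fin n → ℝ} (h : eNorm a = 0) : a = 0 := by
  have h2 := eNorm_sq a
  rw [h] at h2
  exact dotProduct_self_eq_zero.1 (by linarith)

lemma isCompact_eNorm_sphere {n : ℕ} : IsCompact {a : Fin n → ℝ | eNorm a = 1} := by
  refine (isCompact_closedBall (0 : Fin n → ℝ) 1).of_isClosed_subset
    (isClosed_eq continuous_eNorm continuous_const) fun a ha => ?_
  rw [mem_closedBall_zero_iff, pi_norm_le_iff_of_nonneg zero_le_one]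
  intro i
  have h1 : eNorm a ^ 2 = 1 := by rw [show eNorm a = 1 from ha]; norm_num
  rw [eNorm_sq, dotProduct] at h1
  have h2 : a i * a i ≤ ∑ j, a j * a j :=
    Finset.single_le_sum (f := fun j => a j * a j) (fun j _ => mul_self_nonneg _)
      (Finset.mem_univ i)
  rw [Real.norm_eq_abs, abs_le_one_iff_mul_self_le_one]
  linarith

/-- The set of values on the unit sphere of a continuous function is bounded, so that the `sInf`
and `sSup` in `lamMin`, `lamMax` and `specNorm` are genuine bounds. -/
lemma isBounded_sphere_values {n : ℕ} {g : (Fin n → ℝ) → ℝ} (hg : Continuous g) :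
    BddBelow {r | ∃ a : Fin n → ℝ, eNorm a = 1 ∧ r = g a} ∧
      BddAbove {r | ∃ a : Fin n → ℝ, eNorm a = 1 ∧ r = g a} := by
  have h : {r | ∃ a : Fin n → ℝ, eNorm a = 1 ∧ r = g a} = g '' {a | eNorm a = 1} := by
    ext r
    simp [eq_comm]
  rw [h]
  exact ⟨(isCompact_eNorm_sphere.image hg).bddBelow, (isCompact_eNorm_sphere.image hg).bddAbove⟩

lemma exists_eNorm_eq_one_smul {n : ℕ} {a : Fin n → ℝ} (h : eNorm a ≠ 0) :
    ∃ u : Fin n → ℝ, eNorm u = 1 ∧ a = eNorm a • u := by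
  refine ⟨(eNorm a)⁻¹ • a, ?_, ?_⟩
  · rw [eNorm_smul, abs_of_nonneg (inv_nonneg.2 (eNorm_nonneg a)), inv_mul_cancel₀ h]
  · rw [smul_smul, mul_inv_cancel₀ h, one_smul]

lemma continuous_quadForm {n : ℕ} (P : Matrix (Fin n) (Fin n) ℝ) :
    Continuous fun a : Fin n → ℝ => a ⬝ᵥ P.mulVec a :=
  continuous_id.dotProduct (Continuous.matrix_mulVec continuous_const continuous_id)

lemma rayleigh_bounds {n : ℕ} (P : Matrix (Fin n) (Fin n) ℝ) (a : Fin n → ℝ) :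
    lamMin P * eNorm a ^ 2 ≤ a ⬝ᵥ P.mulVec a ∧ a ⬝ᵥ P.mulVec a ≤ lamMax P * eNorm a ^ 2 := by
  by_cases h : eNorm a = 0
  · rw [eNorm_eq_zero h] at *
    simp [h]
  obtain ⟨u, hu, hau⟩ := exists_eNorm_eq_one_smul h
  have hb := isBounded_sphere_values (continuous_quadForm P)
  have h1 : lamMin P ≤ u ⬝ᵥ P.mulVec u := csInf_le hb.1 ⟨u, hu, rfl⟩
  have h2 : u ⬝ᵥ P.mulVec u ≤ lamMax P := le_csSup hb.2 ⟨u, hu, rfl⟩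
  have h3 : a ⬝ᵥ P.mulVec a = (u ⬝ᵥ P.mulVec u) * eNorm a ^ 2 := by
    generalize eNorm a = r at hau
    subst hau
    simp [mulVec_smul]
    ring
  rw [h3]
  exact ⟨by gcongr, by gcongr⟩

lemma specNorm_nonneg {n : ℕ} (M : Matrix (Fin n) (Fin n) ℝ) : 0 ≤ specNorm M := by
  refine Real.sSup_nonneg ?_
  rintro r ⟨a, -, rfl⟩
  exact eNorm_nonneg _

lemma eNorm_mulVec_le {n : ℕ} (M : Matrix (Fin n) (Fin n) ℝ) (a : Fin n → ℝ) :
    eNorm (M.mulVec a) ≤ specNorm M * eNorm a := by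
  by_cases h : eNorm a = 0
  · rw [h, eNorm_eq_zero h]
    simp [eNorm]
  obtain ⟨u, hu, hau⟩ := exists_eNorm_eq_one_smul h
  have hb := isBounded_sphere_values (g := fun a => eNorm (M.mulVec a))
    (continuous_eNorm.comp (Continuous.matrix_mulVec continuous_const continuous_id))
  have h1 : eNorm (M.mulVec u) ≤ specNorm M := le_csSup hb.2 ⟨u, hu, rfl⟩
  have h3 : eNorm (M.mulVec a) = eNorm (M.mulVec u) * eNorm a := by
    conv_lhs => rw [hau]
    rw [mulVec_smul, eNorm_smul, abs_of_nonneg (eNorm_nonneg a), mul_comm]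
  rw [h3]
  exact mul_le_mul_of_nonneg_right h1 (eNorm_nonneg a)

/-- For `n ≠ 0` the unit sphere is nonempty, which excludes the junk values of `sInf` and `sSup`. -/
lemma lamMin_bounds {n : ℕ} (hn : n ≠ 0) (P : Matrix (Fin n) (Fin n) ℝ) {ε : ℝ}
    (h : ∀ a : Fin n → ℝ, ε * (a ⬝ᵥ a) ≤ a ⬝ᵥ P.mulVec a) :
    ε ≤ lamMin P ∧ lamMin P ≤ lamMax P := by
  obtain ⟨u, hu⟩ : ∃ u : Fin n → ℝ, eNorm u = 1 := by
    refine ⟨Pi.single ⟨0, Nat.pos_of_ne_zero hn⟩ 1, ?_⟩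
    refine (pow_eq_one_iff_of_nonneg (eNorm_nonneg _) two_ne_zero).1 ?_
    rw [eNorm_sq, single_one_dotProduct, Pi.single_eq_same]
  constructor
  · refine le_csInf ⟨_, _, hu, rfl⟩ ?_
    rintro r ⟨a, ha, rfl⟩
    have := h a
    rw [← eNorm_sq, ha] at this
    linarith
  · have := rayleigh_bounds P u
    rw [hu] at this
    linarith

lemma hasDerivWithinAt_quadForm {n : ℕ} {P : Matrix (Fin n) (Fin n) ℝ} (hP : Pᵀ = P)
    {a : ℝ → Fin n → ℝ} {v : Fin n → ℝ} {s : Set ℝ} {t : ℝ} (h : HasDerivWithinAt a v s t) :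
    HasDerivWithinAt (fun t => a t ⬝ᵥ P.mulVec (a t)) (2 * (a t ⬝ᵥ P.mulVec v)) s t := by
  have h1 : HasDerivWithinAt (fun t => P.mulVec (a t)) (P.mulVec v) s t :=
    (P.mulVecLin.toContinuousLinearMap.hasFDerivAt (x := a t)).comp_hasDerivWithinAt t h
  have h2 : HasDerivWithinAt (fun t => ∑ i, a t i * P.mulVec (a t) i)
      (∑ i, (v i * P.mulVec (a t) i + a t i * P.mulVec v i)) s t :=
    HasDerivWithinAt.fun_sum fun i _ =>
      (hasDerivWithinAt_pi.1 h i).mul (hasDerivWithinAt_pi.1 h1 i)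
  refine h2.congr_deriv ?_
  have h3 : v ⬝ᵥ P.mulVec (a t) = a t ⬝ᵥ P.mulVec v := by
    rw [dotProduct_mulVec, ← mulVec_transpose, hP, dotProduct_comm]
  rw [Finset.sum_add_distrib]
  change v ⬝ᵥ P.mulVec (a t) + a t ⬝ᵥ P.mulVec v = _
  rw [h3]
  ring

/-- One-sided Grönwall comparison: the differential inequality is only required at times where
`V ≥ c`. -/
lemma le_of_deriv_le_mul_sub {V V' : ℝ → ℝ} {c K τ : ℝ}
    (hV : ∀ t ∈ Icc (0:ℝ) τ, HasDerivWithinAt V (V' t) (Icc (0:ℝ) τ) t)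
    (h0 : V 0 ≤ c) (hK : ∀ t ∈ Icc (0:ℝ) τ, c ≤ V t → V' t ≤ K * (V t - c)) :
    ∀ t ∈ Icc (0:ℝ) τ, V t ≤ c := by
  intro t ht
  -- `V` stays below the strict barrier `c + η e^{(K+1)t}` for every `η > 0`.
  have key : ∀ η : ℝ, 0 < η → V t ≤ c + η * Real.exp ((K + 1) * t) := by
    intro η hη
    have hB : ∀ x, HasDerivAt (fun x => c + η * Real.exp ((K + 1) * x))
        (η * (Real.exp ((K + 1) * x) * (K + 1))) x := by
      intro x
      have := ((((hasDerivAt_id x).const_mul (K + 1)).exp).const_mul η).const_add c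
      simpa using this
    refine image_le_of_deriv_right_lt_deriv_boundary (f := V) (f' := V')
      (fun x hx => (hV x hx).continuousWithinAt)
      (fun x hx => (hV x (Ico_subset_Icc_self hx)).mono_of_mem_nhdsWithin
        (Icc_mem_nhdsGE_of_mem hx)) (by simp; linarith) hB ?_ ht
    intro x hx hVx
    have hpos : 0 < η * Real.exp ((K + 1) * x) := by positivity
    have := hK x (Ico_subset_Icc_self hx) (by rw [hVx]; linarith)
    rw [hVx] at this
    nlinarith
  refine le_of_forall_pos_le_add fun η hη => ?_
  have := key (η / Real.exp ((K + 1) * t)) (by positivity)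
  rwa [div_mul_cancel₀ _ (Real.exp_pos _).ne'] at this

/-- **SOS-certified state bound** (Theorem 3, state-variable conclusion):
if aᵀP_SOSa ≥ εaᵀa and 2aᵀP_SOS(La + Υ(a)) + (δ² − aᵀa)aᵀQa + εaᵀa ≤ 0 for all a
with Q ⪰ 0, then for every ‖a₀‖ ≤ δ√(λmin/λmax) and every input with
sup_{0≤t≤τ}‖f(t)‖ ≤ λmin·ε·δ/(λmax·‖2P_SOS‖), the solution of
ȧ = La + Υ(a) + f satisfies ‖a(t)‖ ≤ δ on [0, τ]. -/
theorem sos_state_bound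
    {n : ℕ} (L : Matrix (Fin n) (Fin n) ℝ)
    (hHurwitz : ∀ z ∈ spectrum ℂ (L.map (algebraMap ℝ ℂ)), z.re < 0)
    (R : Fin n → Matrix (Fin n) (Fin n) ℝ) (hRsym : ∀ m, (R m)ᵀ = R m)
    (hloss : ∀ a : Fin n → ℝ, a ⬝ᵥ Ups R a = 0)
    (ε δ : ℝ) (hε : 0 < ε) (hδ : 0 < δ)
    (P : Matrix (Fin n) (Fin n) ℝ) (hPsym : Pᵀ = P)
    (Q : Matrix (Fin n) (Fin n) ℝ) (hQ : Q.PosSemidef)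
    (hSOS₁ : ∀ a : Fin n → ℝ, ε * (a ⬝ᵥ a) ≤ a ⬝ᵥ P.mulVec a)
    (hSOS₂ : ∀ a : Fin n → ℝ,
      2 * (a ⬝ᵥ P.mulVec (L.mulVec a + Ups R a)) + (δ ^ 2 - a ⬝ᵥ a) * (a ⬝ᵥ Q.mulVec a)
        + ε * (a ⬝ᵥ a) ≤ 0)
    (τ : ℝ) (hτ : 0 < τ)
    (a₀ : Fin n → ℝ) (ha₀ : eNorm a₀ ≤ δ * Real.sqrt (lamMin P / lamMax P))
    (f : ℝ → Fin n → ℝ) (hfc : Continuous f)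
    (hfsmall : ∀ t ∈ Icc (0:ℝ) τ,
      eNorm (f t) ≤ lamMin P * ε * δ / (lamMax P * specNorm ((2:ℝ) • P)))
    (a : ℝ → Fin n → ℝ)
    (hode : ∀ t ∈ Icc (0:ℝ) τ,
      HasDerivWithinAt a (L.mulVec (a t) + Ups R (a t) + f t) (Icc (0:ℝ) τ) t)
    (hinit : a 0 = a₀) :
    ∀ t ∈ Icc (0:ℝ) τ, eNorm (a t) ≤ δ := by
  rcases eq_or_ne n 0 with hn | hn
  · subst hn
    intro t _
    simpa [eNorm] using hδ.le
  obtain ⟨hm, hmM⟩ := lamMin_bounds hn P hSOS₁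
  have hray := rayleigh_bounds P
  have hs := specNorm_nonneg ((2:ℝ) • P)
  have hspec := eNorm_mulVec_le ((2:ℝ) • P)
  set m := lamMin P
  set M := lamMax P
  set s := specNorm ((2:ℝ) • P)
  have hm0 : 0 < m := hε.trans_le hm
  have hM0 : 0 < M := hm0.trans_le hmM
  set κ := m / M with hκ
  have hκ0 : 0 < κ := div_pos hm0 hM0
  have hκ1 : κ ≤ 1 := (div_le_one hM0).2 hmM
  have hκM : M * κ = m := by rw [hκ]; field_simp
  have hac : ContinuousOn a (Icc 0 τ) := fun t ht => (hode t ht).continuousWithinAt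
  obtain ⟨B, hB⟩ := (isCompact_Icc.image_of_continuousOn
    ((continuous_quadForm Q).comp_continuousOn hac)).bddAbove
  have hQ0 : ∀ x : Fin n → ℝ, 0 ≤ x ⬝ᵥ Q.mulVec x := fun x => by
    simpa using hQ.dotProduct_mulVec_nonneg x
  have hQB : ∀ t ∈ Icc (0:ℝ) τ, a t ⬝ᵥ Q.mulVec (a t) ≤ B := fun t ht => hB ⟨t, ht, rfl⟩
  have hV : ∀ t ∈ Icc (0:ℝ) τ, a t ⬝ᵥ P.mulVec (a t) ≤ m * δ ^ 2 := by
    refine le_of_deriv_le_mul_sub (K := B / m)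
      (fun t ht => hasDerivWithinAt_quadForm hPsym (hode t ht)) ?_ ?_
    · rw [hinit]
      calc a₀ ⬝ᵥ P.mulVec a₀ ≤ M * eNorm a₀ ^ 2 := (hray a₀).2
        _ ≤ M * (δ * Real.sqrt κ) ^ 2 := by
          have := eNorm_nonneg a₀
          gcongr
        _ = m * δ ^ 2 := by
          rw [mul_pow, Real.sq_sqrt hκ0.le, ← hκM]
          ring
    · intro t ht hVt
      have hr := eNorm_nonneg (a t)
      obtain ⟨hl, hu⟩ := hray (a t)
      have hsos := hSOS₂ (a t)
      rw [← eNorm_sq] at hsos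
      -- The forcing contributes at most `ε κ δ r`; this also holds for the value `1 / 0 = 0`.
      have hsf : s * eNorm (f t) ≤ κ * ε * δ := by
        rcases hs.eq_or_lt with h0 | h0
        · rw [← h0, zero_mul]
          positivity
        · calc s * eNorm (f t) ≤ s * (m * ε * δ / (M * s)) := by
                gcongr
                exact hfsmall t ht
            _ = κ * ε * δ := by rw [hκ]; field_simp
      have hforce : 2 * (a t ⬝ᵥ P.mulVec (f t)) ≤ κ * ε * δ * eNorm (a t) := by
        have hsymm : 2 * (a t ⬝ᵥ P.mulVec (f t)) = ((2:ℝ) • P).mulVec (a t) ⬝ᵥ f t := by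
          rw [dotProduct_mulVec, ← mulVec_transpose, hPsym, smul_mulVec, smul_dotProduct,
            smul_eq_mul]
        rw [hsymm]
        calc ((2:ℝ) • P).mulVec (a t) ⬝ᵥ f t
            ≤ eNorm (((2:ℝ) • P).mulVec (a t)) * eNorm (f t) := dotProduct_le_eNorm_mul _ _
          _ ≤ s * eNorm (a t) * eNorm (f t) :=
            mul_le_mul_of_nonneg_right (hspec _) (eNorm_nonneg _)
          _ = s * eNorm (f t) * eNorm (a t) := by ring
          _ ≤ κ * ε * δ * eNorm (a t) := mul_le_mul_of_nonneg_right hsf hr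
      have hrκ : κ * δ ≤ eNorm (a t) := by
        have h1 : M * (κ * δ ^ 2) ≤ M * eNorm (a t) ^ 2 := by
          rw [← mul_assoc, hκM]
          exact hVt.trans hu
        have h2 := le_of_mul_le_mul_left h1 hM0
        refine (pow_le_pow_iff_left₀ (by positivity) hr two_ne_zero).1 ?_
        nlinarith [mul_nonneg (mul_nonneg hκ0.le (sub_nonneg.2 hκ1)) (sq_nonneg δ)]
      have hdiss : 0 ≤ ε * eNorm (a t) * (eNorm (a t) - κ * δ) :=
        mul_nonneg (mul_nonneg hε.le hr) (sub_nonneg.2 hrκ)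
      have hout : (eNorm (a t) ^ 2 - δ ^ 2) * (a t ⬝ᵥ Q.mulVec (a t))
          ≤ B / m * (a t ⬝ᵥ P.mulVec (a t) - m * δ ^ 2) := by
        have h1 : eNorm (a t) ^ 2 - δ ^ 2 ≤ (a t ⬝ᵥ P.mulVec (a t) - m * δ ^ 2) / m := by
          rw [le_div_iff₀ hm0]
          linarith
        calc _ ≤ (a t ⬝ᵥ P.mulVec (a t) - m * δ ^ 2) / m * (a t ⬝ᵥ Q.mulVec (a t)) :=
              mul_le_mul_of_nonneg_right h1 (hQ0 _)
          _ ≤ (a t ⬝ᵥ P.mulVec (a t) - m * δ ^ 2) / m * B :=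
              mul_le_mul_of_nonneg_left (hQB t ht) (div_nonneg (sub_nonneg.2 hVt) hm0.le)
          _ = _ := by ring
      rw [mulVec_add P _ (f t), dotProduct_add]
      nlinarith
  intro t ht
  refine (pow_le_pow_iff_left₀ (eNorm_nonneg _) hδ.le two_ne_zero).1 ?_
  exact le_of_mul_le_mul_left ((hray (a t)).1.trans (hV t ht)) hm0
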